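/- arXiv:1709.07072 — 2 statements merged into one kernel-verified Lean document; each statement's English description precedes it below -/
import Mathlib

section
/- Let F be uniformly elliptic with constants λ, Λ and F(0) = 0, let u solve the elliptic double obstacle problem (φ₁, φ₂, F, B₁), and let γ ∈ ℝ be a constant with φ₁(x) < γ < φ₂(x) for all x ∈ B̄₁. Then w := max(u, γ) is a viscosity subsolution of F(D²w) ≥ 0 on B₁, and min(u, γ) is a viscosity supersolution of F(D²·) ≤ 0 on B₁. -/
/-!
Let `w = max u γ` and let `w - ψ` have a local maximum at `x₀`.

If `u x₀ ≥ γ`, then `u x₀ > φ₁ x₀`, and since `u ≤ w` with equality at `x₀`, the function `ψ` also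
touches `u` from above at `x₀`; the subsolution property of `u` on `{φ₁ < u}` applies.

If `u x₀ < γ`, then `w ≥ γ` with equality at `x₀`, so `ψ` has a local minimum at `x₀`. Its Hessian
is therefore positive semidefinite (`hessian_posSemidef`), and ellipticity together with `F 0 = 0`
gives `F (D²ψ(x₀)) ≥ 0`.

The statement for `min u γ` is symmetric: in the second case the Hessian is negative semidefinite,
and ellipticity compares it with `0`.
-/

open Metric MeasureTheory Set

noncomputable section

attribute [local instance] Matrix.frobeniusNormedAddCommGroup

abbrev Mat (n : ℕ) := Matrix (Fin n) (Fin n) ℝ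
abbrev Euc (n : ℕ) := EuclideanSpace ℝ (Fin n)

/-- `F` is uniformly elliptic with constants `lam ≤ Lam`. -/
def UniformlyElliptic {n : ℕ} (lam Lam : ℝ) (F : Mat n → ℝ) : Prop :=
  ∀ M N : Mat n, M.IsSymm → N.IsSymm → N.PosSemidef →
    lam * ‖N‖ ≤ F (M + N) - F M ∧ F (M + N) - F M ≤ Lam * ‖N‖

/-- The Hessian matrix of `ψ` at `x`. -/
def Hessian {n : ℕ} (ψ : Euc n → ℝ) (x : Euc n) : Mat n :=
  Matrix.of fun i j =>
    iteratedFDeriv ℝ 2 ψ x ![EuclideanSpace.single i 1, EuclideanSpace.single j 1]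

/-- `u` is a viscosity supersolution of `F(D²u) ≤ 0` on `Ω`. -/
def ViscSupersolution {n : ℕ} (F : Mat n → ℝ) (u : Euc n → ℝ) (Ω : Set (Euc n)) : Prop :=
  ∀ x₀ ∈ Ω, ∀ ψ : Euc n → ℝ, ContDiffAt ℝ 2 ψ x₀ →
    IsLocalMinOn (fun x => u x - ψ x) Ω x₀ → F (Hessian ψ x₀) ≤ 0

/-- `u` is a viscosity subsolution of `F(D²u) ≥ 0` on `Ω`. -/
def ViscSubsolution {n : ℕ} (F : Mat n → ℝ) (u : Euc n → ℝ) (Ω : Set (Euc n)) : Prop :=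
  ∀ x₀ ∈ Ω, ∀ ψ : Euc n → ℝ, ContDiffAt ℝ 2 ψ x₀ →
    IsLocalMaxOn (fun x => u x - ψ x) Ω x₀ → 0 ≤ F (Hessian ψ x₀)

/-- `u` solves the elliptic double obstacle problem `(φ₁, φ₂, F, B₁)`. -/
def SolvesDOP {n : ℕ} (F : Mat n → ℝ) (φ₁ φ₂ u : Euc n → ℝ) : Prop :=
  ContinuousOn u (closedBall 0 1) ∧
  (∀ x ∈ closedBall (0 : Euc n) 1, φ₁ x ≤ u x ∧ u x ≤ φ₂ x) ∧
  ViscSupersolution F u ({x | u x < φ₂ x} ∩ ball 0 1) ∧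
  ViscSubsolution F u ({x | φ₁ x < u x} ∩ ball 0 1)

open Filter Topology

/-- Second-order necessary condition in one variable, with no continuity assumption on the second
derivative. -/
lemma deriv_deriv_nonneg_of_isLocalMin {g : ℝ → ℝ} {a : ℝ} (hg : IsLocalMin g a)
    (hc : ContinuousAt g a) : 0 ≤ deriv (deriv g) a := by
  by_contra! hneg
  -- A negative second derivative would make `a` a local maximum too, hence `g` locally constant.
  have hmax := isLocalMax_of_deriv_deriv_neg hneg hg.deriv_eq_zero hc
  have hconst : g =ᶠ[𝓝 a] fun _ => g a := by
    filter_upwards [hg, hmax] with t h1 h2 using le_antisymm h2 h1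
  have h0 : deriv (deriv g) a = 0 := by
    rw [hconst.deriv.deriv_eq]
    simp
  exact hneg.ne h0

/-- The second-order necessary condition along a line through a local minimum. -/
lemma fderiv_fderiv_nonneg_of_isLocalMin {n : ℕ} {ψ : Euc n → ℝ} {x₀ : Euc n}
    (hψ : ContDiffAt ℝ 2 ψ x₀) (hmin : IsLocalMin ψ x₀) (v : Euc n) :
    0 ≤ fderiv ℝ (fderiv ℝ ψ) x₀ v v := by
  set l : ℝ → Euc n := fun t => x₀ + t • v with hl
  have hl0 : l 0 = x₀ := by simp [hl]
  have hld : ∀ t, HasDerivAt l v t := fun t => by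
    simpa [hl] using ((hasDerivAt_id t).smul_const v).const_add x₀
  have hlt : Tendsto l (𝓝 0) (𝓝 x₀) := by
    simpa [ContinuousAt, hl0] using (hld 0).continuousAt
  have hdiff : ∀ᶠ x in 𝓝 x₀, DifferentiableAt ℝ ψ x := by
    filter_upwards [hψ.eventually (by simp)] with x hx using hx.differentiableAt (by norm_num)
  have h1 : deriv (ψ ∘ l) =ᶠ[𝓝 0] fun t => fderiv ℝ ψ (l t) v := by
    filter_upwards [hlt.eventually hdiff] with t ht
    exact (ht.hasFDerivAt.comp_hasDerivAt t (hld t)).deriv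
  have hd2 : HasFDerivAt (fderiv ℝ ψ) (fderiv ℝ (fderiv ℝ ψ) x₀) (l 0) := by
    rw [hl0]
    exact ((hψ.fderiv_right (m := 1) (by norm_num)).differentiableAt (by norm_num)).hasFDerivAt
  have h2 : deriv (fun t => fderiv ℝ ψ (l t) v) 0 = fderiv ℝ (fderiv ℝ ψ) x₀ v v := by
    have := (hd2.comp_hasDerivAt 0 (hld 0)).clm_apply (hasDerivAt_const (0 : ℝ) v)
    simpa using this.deriv
  rw [← h2, ← h1.deriv_eq]
  refine deriv_deriv_nonneg_of_isLocalMin ?_ ?_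
  · have : IsMinFilter ψ (𝓝 x₀) (l 0) := by rw [hl0]; exact hmin
    exact this.comp_tendsto hlt
  · refine ContinuousAt.comp ?_ (hld 0).continuousAt
    rw [hl0]
    exact hψ.continuousAt

lemma hessian_apply {n : ℕ} (ψ : Euc n → ℝ) (x : Euc n) (i j : Fin n) :
    Hessian ψ x i j = fderiv ℝ (fderiv ℝ ψ) x (EuclideanSpace.single i 1)
      (EuclideanSpace.single j 1) := by
  simp [Hessian, iteratedFDeriv_two_apply]

lemma hessian_neg {n : ℕ} (ψ : Euc n → ℝ) (x : Euc n) :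
    Hessian (fun y => -ψ y) x = -Hessian ψ x := by
  ext i j
  have h : fderiv ℝ (fun y => -ψ y) = fun y => -fderiv ℝ ψ y := by
    funext y
    exact fderiv_fun_neg
  rw [Matrix.neg_apply, hessian_apply, hessian_apply, h, fderiv_fun_neg]
  rfl

lemma hessian_isSymm {n : ℕ} {ψ : Euc n → ℝ} {x : Euc n} (hψ : ContDiffAt ℝ 2 ψ x) :
    (Hessian ψ x).IsSymm := by
  ext i j
  rw [Matrix.transpose_apply, hessian_apply, hessian_apply]
  exact (hψ.isSymmSndFDerivAt (by simp)) _ _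

lemma hessian_posSemidef {n : ℕ} {ψ : Euc n → ℝ} {x : Euc n} (hψ : ContDiffAt ℝ 2 ψ x)
    (hmin : IsLocalMin ψ x) : (Hessian ψ x).PosSemidef := by
  refine .of_dotProduct_mulVec_nonneg ?_ fun y => ?_
  · rw [Matrix.IsHermitian, Matrix.conjTranspose_eq_transpose_of_trivial]
    exact hessian_isSymm hψ
  · have key := fderiv_fderiv_nonneg_of_isLocalMin hψ hmin (WithLp.toLp 2 y)
    have hy : (WithLp.toLp 2 y : Euc n) = ∑ i, y i • EuclideanSpace.single i (1 : ℝ) := by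
      ext k
      simp [Finset.sum_apply, Pi.single_apply]
    rw [hy] at key
    simp only [map_sum, map_smul, _root_.sum_apply,
      _root_.smul_apply, ← hessian_apply, smul_eq_mul] at key
    simp only [Finset.mul_sum] at key
    simp only [star_trivial, dotProduct, Matrix.mulVec, Finset.mul_sum]
    rw [Finset.sum_comm]
    refine key.trans_eq (Finset.sum_congr rfl fun i _ => Finset.sum_congr rfl fun j _ => ?_)
    ring

/-- Truncating a solution of the elliptic double obstacle problem at a constant level strictly
between the obstacles yields a global subsolution (for `max`) and supersolution (for `min`). -/
theorem stmt_16 (n : ℕ) (hn : 1 ≤ n) (lam Lam : ℝ) (hlam : 0 < lam) (hlL : lam ≤ Lam)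
    (F : Mat n → ℝ) (hF : UniformlyElliptic lam Lam F) (hF0 : F 0 = 0)
    (φ₁ φ₂ u : Euc n → ℝ) (hu : SolvesDOP F φ₁ φ₂ u)
    (γ : ℝ) (hγ : ∀ x ∈ closedBall (0 : Euc n) 1, φ₁ x < γ ∧ γ < φ₂ x) :
    ViscSubsolution F (fun x => max (u x) γ) (ball 0 1) ∧
    ViscSupersolution F (fun x => min (u x) γ) (ball 0 1) := by
  obtain ⟨-, -, hsup, hsub⟩ := hu
  have hnhds : ∀ x₀ ∈ ball (0 : Euc n) 1, 𝓝[ball 0 1] x₀ = 𝓝 x₀ := fun x₀ hx₀ =>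
    isOpen_ball.nhdsWithin_eq hx₀
  constructor
  · intro x₀ hx₀ ψ hψ hmax
    rcases le_or_gt γ (u x₀) with h | h
    · refine hsub x₀ ⟨(hγ x₀ (ball_subset_closedBall hx₀)).1.trans_le h, hx₀⟩ ψ hψ ?_
      filter_upwards [nhdsWithin_mono x₀ inter_subset_right hmax] with x hx
      simp only [max_eq_left h] at hx
      linarith [le_max_left (u x) γ]
    · have hmin : IsLocalMin ψ x₀ := by
        have hmax' : ∀ᶠ x in 𝓝 x₀, max (u x) γ - ψ x ≤ max (u x₀) γ - ψ x₀ := by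
          rw [← hnhds x₀ hx₀]; exact hmax
        filter_upwards [hmax'] with x hx
        rw [max_eq_right h.le] at hx
        linarith [le_max_right (u x) γ]
      have hell := (hF 0 (Hessian ψ x₀) Matrix.isSymm_zero (hessian_isSymm hψ)
        (hessian_posSemidef hψ hmin)).1
      rw [zero_add, hF0, sub_zero] at hell
      exact (mul_nonneg hlam.le (norm_nonneg _)).trans hell
  · intro x₀ hx₀ ψ hψ hmin
    rcases le_or_gt (u x₀) γ with h | h
    · refine hsup x₀ ⟨h.trans_lt (hγ x₀ (ball_subset_closedBall hx₀)).2, hx₀⟩ ψ hψ ?_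
      filter_upwards [nhdsWithin_mono x₀ inter_subset_right hmin] with x hx
      simp only [min_eq_left h] at hx
      linarith [min_le_left (u x) γ]
    · have hmax : IsLocalMin (fun x => -ψ x) x₀ := by
        have hmin' : ∀ᶠ x in 𝓝 x₀, min (u x₀) γ - ψ x₀ ≤ min (u x) γ - ψ x := by
          rw [← hnhds x₀ hx₀]; exact hmin
        filter_upwards [hmin'] with x hx
        rw [min_eq_right h.le] at hx
        linarith [min_le_right (u x) γ]
      have hell := (hF (Hessian ψ x₀) (Hessian (fun x => -ψ x) x₀) (hessian_isSymm hψ)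
        (hessian_isSymm hψ.neg) (hessian_posSemidef hψ.neg hmax)).1
      have hz : Hessian ψ x₀ + Hessian (fun x => -ψ x) x₀ = 0 := by
        rw [hessian_neg, add_neg_cancel]
      rw [hz, hF0] at hell
      linarith [mul_nonneg hlam.le (norm_nonneg (Hessian (fun x => -ψ x) x₀))]
end
end

section
/- Let F be uniformly elliptic with constants λ, Λ, let C₀ > 0, and let β : ℝ → ℝ be a C¹ function with β' > 0 everywhere, β(0) = −C₀, and −C₀ ≤ β(s) ≤ C₀ for all s > 0. Let φ₁, φ₂ be C² functions on B̄₁ with φ₁ ≤ φ₂ on B̄₁, and let u be a C² function on B̄₁ satisfying F(D²u(x)) = β(u(x) − φ₁(x)) − β(φ₂(x) − u(x)) for all x ∈ B₁ and φ₁ ≤ u ≤ φ₂ on ∂B₁. Then |β(u(x) − φ₁(x)) − β(φ₂(x) − u(x))| ≤ C for all x ∈ B̄₁, where C depends only on C₀, sup_{B̄₁}|F(D²φ₁)| and sup_{B̄₁}|F(D²φ₂)| (in particular C is independent of β beyond the constant C₀). -/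
/-!
The proof is a maximum principle. If `u - φ₁` is negative somewhere, it attains its minimum over the
closed ball at an interior point `x₀`, where `D²u ≥ D²φ₁`, so ellipticity gives
`F(D²u) ≥ F(D²φ₁) ≥ -K₁`. At `x₀` one has `u < φ₁ ≤ φ₂`, hence `β(φ₂ - u) ≥ -C₀`, and the equation
yields `β(u - φ₁) ≥ -K₁ - C₀` at `x₀`; since `β` is increasing the bound propagates to the whole ball.
The same argument applied to `φ₂ - u` gives `β(φ₂ - u) ≥ -K₂ - C₀`. As `β ≤ C₀` everywhere, the
difference of the two terms is bounded by `2 C₀ + |K₁| + |K₂|`.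

The comparison of Hessians at a touching point is `le_of_touching`; it rests on the second order
necessary condition `IsLocalMin.fderiv_fderiv_nonneg`, which is reduced to one variable.
-/

open Metric MeasureTheory Set

noncomputable section

attribute [local instance] Matrix.frobeniusNormedAddCommGroup

/-- Second order necessary condition for a local minimum in one variable. If the second derivative
were negative, the second derivative test would make `a` a local maximum too, so that `g` would be
constant near `a`. -/
theorem IsLocalMin.deriv_deriv_nonneg {g : ℝ → ℝ} {a : ℝ} (h : IsLocalMin g a)
    (hc : ContinuousAt g a) : 0 ≤ deriv (deriv g) a := by
  by_contra! hneg
  have hmax : IsLocalMax g a := isLocalMax_of_deriv_deriv_neg hneg h.deriv_eq_zero hc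
  have hconst : g =ᶠ[nhds a] fun _ => g a := by
    filter_upwards [h, hmax] with y h1 h2
    exact le_antisymm h2 h1
  have h0 : deriv (deriv g) a = 0 := by
    rw [hconst.deriv.deriv_eq]
    simp
  linarith

theorem IsLocalMin.fderiv_fderiv_nonneg {E : Type*} [NormedAddCommGroup E] [NormedSpace ℝ E]
    {f : E → ℝ} {a : E} (h : IsLocalMin f a) (hf : ContDiffAt ℝ 2 f a) (v : E) :
    0 ≤ fderiv ℝ (fderiv ℝ f) a v v := by
  have hline : ∀ t : ℝ, HasDerivAt (fun t : ℝ => a + t • v) v t := fun t => by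
    simpa using ((hasDerivAt_id t).smul_const v).const_add a
  have h0 : a + (0 : ℝ) • v = a := by simp
  have htend : Filter.Tendsto (fun t : ℝ => a + t • v) (nhds 0) (nhds a) := by
    simpa [h0] using (hline 0).continuousAt.tendsto
  have hdiff : ∀ᶠ y in nhds a, DifferentiableAt ℝ f y :=
    (hf.eventually (by simp)).mono fun y hy => hy.differentiableAt (by simp)
  have hderiv : deriv (fun t : ℝ => f (a + t • v)) =ᶠ[nhds 0]
      fun t => fderiv ℝ f (a + t • v) v := by
    filter_upwards [htend.eventually hdiff] with t ht
    exact (ht.hasFDerivAt.comp_hasDerivAt t (hline t)).deriv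
  have hf' : DifferentiableAt ℝ (fderiv ℝ f) (a + (0 : ℝ) • v) := by
    rw [h0]
    exact (hf.fderiv_right (m := 1) (by norm_num)).differentiableAt (by simp)
  have hsecond : deriv (fun t : ℝ => fderiv ℝ f (a + t • v) v) 0
      = fderiv ℝ (fderiv ℝ f) a v v := by
    have h1 : HasDerivAt (fun t : ℝ => fderiv ℝ f (a + t • v))
        (fderiv ℝ (fderiv ℝ f) (a + (0 : ℝ) • v) v) 0 :=
      hf'.hasFDerivAt.comp_hasDerivAt (0 : ℝ) (hline 0)
    have h2 := h1.clm_apply (hasDerivAt_const (0 : ℝ) v)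
    rw [h2.deriv, h0]
    simp
  have hmin : IsLocalMin (fun t : ℝ => f (a + t • v)) 0 := by
    have := htend.eventually h
    simpa [IsLocalMin, IsMinFilter] using this
  have hcont : ContinuousAt (fun t : ℝ => f (a + t • v)) 0 := by
    refine ContinuousAt.comp (f := fun t : ℝ => a + t • v) ?_ (hline 0).continuousAt
    simpa [h0] using hf.continuousAt
  have := hmin.deriv_deriv_nonneg hcont
  rwa [hderiv.deriv_eq, hsecond] at this

theorem Hessian_isSymm {n : ℕ} {f : Euc n → ℝ} {a : Euc n} (hf : ContDiffAt ℝ 2 f a) :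
    (Hessian f a).IsSymm := by
  have hs : IsSymmSndFDerivAt ℝ f a := hf.isSymmSndFDerivAt (by simp)
  ext i j
  simpa [Hessian, iteratedFDeriv_two_apply] using hs.eq _ _

/-- The quadratic form of the Hessian matrix is the second derivative along a vector. -/
theorem Hessian_quadForm {n : ℕ} (f : Euc n → ℝ) (a : Euc n) (x : Fin n → ℝ) :
    x ⬝ᵥ (Hessian f a).mulVec x
      = fderiv ℝ (fderiv ℝ f) a (WithLp.toLp 2 x) (WithLp.toLp 2 x) := by
  have hx : (WithLp.toLp 2 x : Euc n) = ∑ i, x i • EuclideanSpace.single i (1 : ℝ) := by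
    ext j
    simp [Finset.sum_apply, Pi.single_apply]
  rw [hx]
  simp [Hessian, iteratedFDeriv_two_apply, dotProduct, Matrix.mulVec, Finset.mul_sum]
  rw [Finset.sum_comm]
  refine Finset.sum_congr rfl fun i _ => Finset.sum_congr rfl fun j _ => ?_
  ring

theorem Hessian_sub {n : ℕ} {f g : Euc n → ℝ} {a : Euc n} (hf : ContDiffAt ℝ 2 f a)
    (hg : ContDiffAt ℝ 2 g a) : Hessian (f - g) a = Hessian f a - Hessian g a := by
  ext i j
  simp [Hessian, iteratedFDeriv_sub_apply (i := 2) hf hg]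

theorem Hessian_posSemidef {n : ℕ} {f : Euc n → ℝ} {a : Euc n} (h : IsLocalMin f a)
    (hf : ContDiffAt ℝ 2 f a) : (Hessian f a).PosSemidef := by
  refine Matrix.PosSemidef.of_dotProduct_mulVec_nonneg ?_ fun x => ?_
  · rw [Matrix.IsHermitian, Matrix.conjTranspose_eq_transpose_of_trivial]
    exact Hessian_isSymm hf
  · rw [star_trivial, Hessian_quadForm]
    exact h.fderiv_fderiv_nonneg hf _

/-- If `v ≤ w` on the sphere but not in the whole ball, then `w - v` attains its negative minimum at
an interior point, where the elliptic operator is ordered. -/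
theorem le_of_touching {n : ℕ} {lam Lam : ℝ} (hlam : 0 < lam) {F : Mat n → ℝ}
    (hF : UniformlyElliptic lam Lam F) {v w : Euc n → ℝ}
    (hv : ContDiffOn ℝ 2 v (closedBall 0 1)) (hw : ContDiffOn ℝ 2 w (closedBall 0 1))
    (hs : ∀ x ∈ sphere (0 : Euc n) 1, v x ≤ w x)
    {y : Euc n} (hy : y ∈ closedBall (0 : Euc n) 1) (hlt : w y < v y) :
    ∃ x₀ ∈ ball (0 : Euc n) 1, w x₀ < v x₀ ∧
      (∀ x ∈ closedBall (0 : Euc n) 1, w x₀ - v x₀ ≤ w x - v x) ∧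
      F (Hessian v x₀) ≤ F (Hessian w x₀) := by
  obtain ⟨x₀, hx₀, hmin⟩ := (isCompact_closedBall (0 : Euc n) 1).exists_isMinOn ⟨y, hy⟩
    (hw.continuousOn.sub hv.continuousOn)
  have hmin' : ∀ x ∈ closedBall (0 : Euc n) 1, w x₀ - v x₀ ≤ w x - v x := fun x hx => hmin hx
  have hneg : w x₀ < v x₀ := by linarith [hmin' y hy]
  have hball : x₀ ∈ ball (0 : Euc n) 1 := by
    rw [← ball_union_sphere] at hx₀
    exact hx₀.resolve_right fun h => absurd (hs x₀ h) (not_le.2 hneg)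
  have hnhds : closedBall (0 : Euc n) 1 ∈ nhds x₀ :=
    Filter.mem_of_superset (isOpen_ball.mem_nhds hball) ball_subset_closedBall
  have hv₀ := hv.contDiffAt hnhds
  have hw₀ := hw.contDiffAt hnhds
  have hloc : IsLocalMin (w - v) x₀ := by
    filter_upwards [hnhds] with x hx
    exact hmin' x hx
  refine ⟨x₀, hball, hneg, hmin', ?_⟩
  have hN := Hessian_posSemidef hloc (hw₀.sub hv₀)
  have hell := (hF (Hessian v x₀) (Hessian (w - v) x₀) (Hessian_isSymm hv₀)
    (Hessian_isSymm (hw₀.sub hv₀)) hN).1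
  rw [Hessian_sub hw₀ hv₀, add_sub_cancel] at hell
  have := mul_nonneg hlam.le (norm_nonneg (Hessian w x₀ - Hessian v x₀))
  linarith

/-- Uniform bound on the penalization term for solutions of the penalized equation, with a
constant independent of the penalization `β` beyond the constant `C₀`. -/
theorem stmt_18 (C₀ K₁ K₂ : ℝ) (hC₀ : 0 < C₀) :
    ∃ C : ℝ, ∀ (n : ℕ), 1 ≤ n → ∀ lam Lam : ℝ, 0 < lam → lam ≤ Lam →
      ∀ (F : Mat n → ℝ) (β : ℝ → ℝ) (φ₁ φ₂ u : Euc n → ℝ),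
      UniformlyElliptic lam Lam F →
      ContDiff ℝ 1 β → (∀ s : ℝ, 0 < deriv β s) → β 0 = -C₀ →
      (∀ s : ℝ, 0 < s → -C₀ ≤ β s ∧ β s ≤ C₀) →
      ContDiffOn ℝ 2 φ₁ (closedBall 0 1) → ContDiffOn ℝ 2 φ₂ (closedBall 0 1) →
      (∀ x ∈ closedBall (0 : Euc n) 1, φ₁ x ≤ φ₂ x) →
      ContDiffOn ℝ 2 u (closedBall 0 1) →
      (∀ x ∈ ball (0 : Euc n) 1, F (Hessian u x) = β (u x - φ₁ x) - β (φ₂ x - u x)) →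
      (∀ x ∈ sphere (0 : Euc n) 1, φ₁ x ≤ u x ∧ u x ≤ φ₂ x) →
      (∀ x ∈ ball (0 : Euc n) 1, |F (Hessian φ₁ x)| ≤ K₁) →
      (∀ x ∈ ball (0 : Euc n) 1, |F (Hessian φ₂ x)| ≤ K₂) →
      ∀ x ∈ closedBall (0 : Euc n) 1, |β (u x - φ₁ x) - β (φ₂ x - u x)| ≤ C := by
  refine ⟨2 * C₀ + |K₁| + |K₂|, ?_⟩
  intro n _ lam Lam hlam _ F β φ₁ φ₂ u hF _ hβ' hβ0 hβ hφ₁ hφ₂ hφ hu heq hbd hK₁ hK₂ x hx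
  have hmono : StrictMono β := strictMono_of_deriv_pos hβ'
  have hup : ∀ s, β s ≤ C₀ := fun s => by
    rcases lt_or_ge 0 s with hs | hs
    · exact (hβ s hs).2
    · linarith [hmono.monotone hs]
  have hlow : ∀ s, 0 ≤ s → -C₀ ≤ β s := fun s hs => hβ0 ▸ hmono.monotone hs
  have h1 : -C₀ - |K₁| ≤ β (u x - φ₁ x) := by
    rcases lt_or_ge (u x) (φ₁ x) with h | h
    · obtain ⟨x₀, hx₀, hneg, hmin, hle⟩ :=
        le_of_touching hlam hF hφ₁ hu (fun z hz => (hbd z hz).1) hx h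
      have e1 := hlow (φ₂ x₀ - u x₀) (by linarith [hφ x₀ (ball_subset_closedBall hx₀)])
      have e2 := hmono.monotone (hmin x hx)
      linarith [heq x₀ hx₀, (abs_le.1 (hK₁ x₀ hx₀)).1, le_abs_self K₁]
    · linarith [hlow (u x - φ₁ x) (by linarith), abs_nonneg K₁]
  have h2 : -C₀ - |K₂| ≤ β (φ₂ x - u x) := by
    rcases lt_or_ge (φ₂ x) (u x) with h | h
    · obtain ⟨x₀, hx₀, hneg, hmin, hle⟩ :=
        le_of_touching hlam hF hu hφ₂ (fun z hz => (hbd z hz).2) hx h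
      have e1 := hlow (u x₀ - φ₁ x₀) (by linarith [hφ x₀ (ball_subset_closedBall hx₀)])
      have e2 := hmono.monotone (hmin x hx)
      linarith [heq x₀ hx₀, (abs_le.1 (hK₂ x₀ hx₀)).2, le_abs_self K₂]
    · linarith [hlow (φ₂ x - u x) (by linarith), abs_nonneg K₂]
  rw [abs_le]
  constructor <;>
    linarith [hup (u x - φ₁ x), hup (φ₂ x - u x), abs_nonneg K₁, abs_nonneg K₂]
end
end
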